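/- arXiv:1001.4360 — 4 statements merged into one kernel-verified Lean document; each statement's English description precedes it below -/
import Mathlib

section
/- For every integer r ≥ 1, every integer i, and every integer n ≥ 1, the generalized cluster variables satisfy the identity X(i+n, 1) · X(i, n) = X(i, n+1) + X(i, n-1) in the field ℚ(x_1,…,x_r). (This is the multiplication formula coming from the non-split triangle with end terms the simple E_{i+n} and the indecomposable E_i[n].) -/
/-- The ambient field `ℚ(x_1, …, x_r)`, realized as the fraction field of the
polynomial ring over `ℚ` in variables indexed by `ZMod r` (so indices are
automatically read modulo `r`). -/
noncomputable abbrev CyclicField (r : ℕ) : Type :=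
  FractionRing (MvPolynomial (ZMod r) ℚ)

/-- The variable `x_i` for `i : ℤ`, with `x_{i+r} = x_i`. -/
noncomputable def xv (r : ℕ) (i : ℤ) : CyclicField r :=
  algebraMap (MvPolynomial (ZMod r) ℚ) (CyclicField r) (MvPolynomial.X (i : ZMod r))

/-- The generalized cluster variable `X(l, n)` (the image of the indecomposable
nilpotent representation `E_l[n]` under the Caldero–Chapoton map):
`X(l,0) = 1` and, for `n ≥ 1`,
`X(l,n) = x_{l+n}/x_l + Σ_{k=1}^{n-1} (x_{l+n}·x_{l+r-1})/(x_{l+k-1}·x_{l+k}) + x_{l+r-1}/x_{l+n-1}`. -/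
noncomputable def Xgcv (r : ℕ) (l : ℤ) : ℕ → CyclicField r
  | 0 => 1
  | n + 1 =>
      xv r (l + n + 1) / xv r l
        + ∑ k ∈ Finset.Icc 1 n,
            (xv r (l + n + 1) * xv r (l + r - 1)) / (xv r (l + k - 1) * xv r (l + k))
        + xv r (l + r - 1) / xv r (l + n)

theorem xv_ne (r : ℕ) (i : ℤ) : xv r i ≠ 0 := by
  unfold xv
  intro h
  have h2 := (IsFractionRing.injective (MvPolynomial (ZMod r) ℚ) (CyclicField r))
    (h.trans (map_zero _).symm)
  exact MvPolynomial.X_ne_zero _ h2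

/-- Partial sums `Σ_{k<n} 1/(x_{l+k} x_{l+k+1})`. -/
noncomputable def Sg (r : ℕ) (l : ℤ) (n : ℕ) : CyclicField r :=
  ∑ k ∈ Finset.range n, 1 / (xv r (l + k) * xv r (l + k + 1))

theorem Sg_succ (r : ℕ) (l : ℤ) (n : ℕ) :
    Sg r l (n + 1) = Sg r l n + 1 / (xv r (l + n) * xv r (l + n + 1)) := by
  unfold Sg
  rw [Finset.sum_range_succ]

theorem sum_Icc_eq (r : ℕ) (l : ℤ) (c : CyclicField r) (n : ℕ) :
    ∑ k ∈ Finset.Icc 1 n, c / (xv r (l + k - 1) * xv r (l + k)) = c * Sg r l n := by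
  induction n with
  | zero => simp [Sg]
  | succ n ih =>
    rw [Finset.sum_Icc_succ_top (by omega), ih, Sg_succ]
    have e1 : l + ((n + 1 : ℕ) : ℤ) - 1 = l + n := by push_cast; ring
    have e2 : l + ((n + 1 : ℕ) : ℤ) = l + n + 1 := by push_cast; ring
    rw [e1, e2]
    ring

theorem Xgcv_closed (r : ℕ) (l : ℤ) (n : ℕ) :
    Xgcv r l n = xv r (l + n) * (1 / xv r l + xv r (l + r - 1) * Sg r l n) := by
  cases n with
  | zero =>
    have := xv_ne r l
    simp [Xgcv, Sg, this]
  | succ n =>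
    have e2 : l + ((n + 1 : ℕ) : ℤ) = l + n + 1 := by push_cast; ring
    rw [Xgcv, sum_Icc_eq, Sg_succ, e2]
    have h0 := xv_ne r l
    have h1 := xv_ne r (l + n)
    have h2 := xv_ne r (l + n + 1)
    field_simp
    try ring

theorem xv_period (r : ℕ) (i : ℤ) : xv r (i + r) = xv r i := by
  simp [xv]

/-- `X(i+n, 1) · X(i, n) = X(i, n+1) + X(i, n-1)` for `r ≥ 1`, `i ∈ ℤ`, `n ≥ 1`. -/
theorem stmt0 (r : ℕ) (hr : 1 ≤ r) (i : ℤ) (n : ℕ) (hn : 1 ≤ n) :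
    Xgcv r (i + n) 1 * Xgcv r i n = Xgcv r i (n + 1) + Xgcv r i (n - 1) := by
  obtain ⟨m, rfl⟩ : ∃ m, n = m + 1 := ⟨n - 1, by omega⟩
  have hX : Xgcv r (i + ((m + 1 : ℕ) : ℤ)) 1
      = (xv r (i + m + 1 + 1) + xv r (i + m)) / xv r (i + m + 1) := by
    have e1 : i + ((m + 1 : ℕ) : ℤ) = i + m + 1 := by push_cast; ring
    have e2 : i + (m : ℤ) + 1 + r - 1 = i + m + r := by ring
    rw [e1]
    simp [Xgcv, e2, xv_period, add_div]
  have e1 : i + ((m + 1 : ℕ) : ℤ) = i + m + 1 := by push_cast; ring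
  have e3 : i + ((m + 1 + 1 : ℕ) : ℤ) = i + m + 1 + 1 := by push_cast; ring
  rw [hX, Xgcv_closed, Xgcv_closed, Xgcv_closed, Nat.add_sub_cancel, Sg_succ r i (m + 1),
    Sg_succ r i m, e3, e1]
  have h0 := xv_ne r i
  have h1 := xv_ne r (i + m)
  have h2 := xv_ne r (i + m + 1)
  have h3 := xv_ne r (i + m + 1 + 1)
  generalize xv r (i + m + 1 + 1) = a at *
  generalize xv r (i + m + 1) = b at *
  generalize xv r (i + m) = c at *
  field_simp
  ring
end

section
/- For every integer r ≥ 1, every integer i, and every integer n ≥ 1, the generalized cluster variables satisfy the identity X(i, 1) · X(i+1, n) = X(i, n+1) + X(i+2, n-1) in the field ℚ(x_1,…,x_r). (This is the multiplication formula coming from the non-split triangle with end terms the simple E_i and the indecomposable E_{i+1}[n].) -/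
theorem xv_per (r : ℕ) (l : ℤ) : xv r (l + r - 1) = xv r (l - 1) := by
  unfold xv
  simp

theorem Xgcv_eq (r : ℕ) (l : ℤ) (n : ℕ) :
    Xgcv r l n = xv r (l + n) * xv r (l - 1) *
      ∑ k ∈ Finset.range (n + 1), 1 / (xv r (l + k - 1) * xv r (l + k)) := by
  cases n with
  | zero =>
    have h1 := xv_ne r l
    have h2 := xv_ne r (l - 1)
    simp [Xgcv]
    field_simp
  | succ n =>
    have h1 := xv_ne r l
    have h2 := xv_ne r (l - 1)
    have h3 := xv_ne r (l + n)
    have h4 := xv_ne r (l + n + 1)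
    have e : ∑ k ∈ Finset.Icc 1 n,
            (xv r (l + n + 1) * xv r (l - 1)) / (xv r (l + k - 1) * xv r (l + k))
        = xv r (l + n + 1) * xv r (l - 1) * ∑ k ∈ Finset.range n,
            1 / (xv r (l + (k + 1 : ℕ) - 1) * xv r (l + (k + 1 : ℕ))) := by
      rw [Finset.mul_sum, ← Finset.Ico_add_one_right_eq_Icc, Finset.sum_Ico_eq_sum_range]
      refine Finset.sum_congr (by simp) fun k _ => ?_
      rw [add_comm 1 k, mul_one_div]
    rw [Finset.sum_range_succ, Finset.sum_range_succ']
    simp only [Xgcv, xv_per]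
    rw [e]
    have a1 : l + ((n + 1 : ℕ) : ℤ) = l + n + 1 := by push_cast; ring
    have a2 : l + (n : ℤ) + 1 - 1 = l + n := by ring
    rw [a1, a2]
    simp only [Nat.cast_zero, add_zero]
    generalize ∑ k ∈ Finset.range n, (_ : CyclicField r) = S
    field_simp
    ring

/-- `X(i, 1) · X(i+1, n) = X(i, n+1) + X(i+2, n-1)` for `r ≥ 1`, `i ∈ ℤ`, `n ≥ 1`. -/
theorem stmt1 (r : ℕ) (hr : 1 ≤ r) (i : ℤ) (n : ℕ) (hn : 1 ≤ n) :
    Xgcv r i 1 * Xgcv r (i + 1) n = Xgcv r i (n + 1) + Xgcv r (i + 2) (n - 1) := by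
  obtain ⟨m, rfl⟩ : ∃ m, n = m + 1 := ⟨n - 1, by omega⟩
  have h1 := xv_ne r i
  have h2 := xv_ne r (i - 1)
  have h3 := xv_ne r (i + 1)
  simp only [Xgcv_eq, Nat.add_sub_cancel]
  rw [Finset.sum_range_succ' _ (m + 1), Finset.sum_range_succ' _ (m + 1 + 1),
    Finset.sum_range_succ' _ (m + 1)]
  rw [Finset.sum_range_succ _ 1, Finset.sum_range_one]
  have b1 : ∀ k : ℕ, i + 1 + ((k + 1 : ℕ) : ℤ) = i + 2 + k := fun k => by push_cast; ring
  have b2 : ∀ k : ℕ, i + ((k + 1 + 1 : ℕ) : ℤ) = i + 2 + k := fun k => by push_cast; ring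
  have b3 : i + 1 - 1 = i := by ring
  have b4 : i + 2 - 1 = i + 1 := by ring
  simp only [b1, b2, b3, b4, Nat.cast_zero, Nat.cast_one, add_zero, zero_add]
  generalize ∑ k ∈ Finset.range (m + 1), (_ : CyclicField r) = S
  field_simp
  ring
end

section
/- Let r ≥ 1 and let i, j, k, l, m be integers with 1 ≤ j ≤ i ≤ r, 0 ≤ l ≤ r-1, m ≥ 0, 1 ≤ k ≤ mr+l, and k + i ≥ r + j. Then in ℚ(x_1,…,x_r) one has X(i,k) · X(j, mr+l) = X(i, (m+1)r+l+j-i) · X(j, k+i-r-j) + X(i, r+j-i-1) · X(k+i+1, (m+1)r+l+j-k-i-1). -/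
theorem xv_add (r : ℕ) (i : ℤ) (c : ℤ) : xv r (i + c * r) = xv r i := by
  simp [xv]

/-- Partial sums of `1/(x_{t-1} x_t)`. -/
noncomputable def SS (r : ℕ) (a : ℤ) : CyclicField r :=
  ∑ t ∈ Finset.range a.toNat, 1 / (xv r ((t : ℤ) - 1) * xv r t)

theorem SS_succ (r : ℕ) (a : ℤ) (ha : 0 ≤ a) :
    SS r (a + 1) = SS r a + 1 / (xv r (a - 1) * xv r a) := by
  lift a to ℕ using ha
  have h : ((a : ℤ) + 1).toNat = a + 1 := by omega
  simp only [SS, h, Finset.sum_range_succ, Int.toNat_natCast]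

theorem SS_per (r : ℕ) (a : ℤ) (ha : 0 ≤ a) : SS r (a + r) = SS r a + SS r r := by
  lift a to ℕ using ha
  induction a with
  | zero => simp [SS]
  | succ n ih =>
    have e : (((n + 1 : ℕ) : ℤ) + r) = ((n : ℤ) + r) + 1 := by push_cast; ring
    have e2 : (((n + 1 : ℕ) : ℤ)) = (n : ℤ) + 1 := by push_cast; ring
    rw [e, e2, SS_succ r _ (by omega), SS_succ r _ (by omega), ih]
    have h1 := xv_add r n 1
    have h2 := xv_add r (n - 1) 1
    rw [one_mul] at h1 h2
    rw [show (n : ℤ) + r - 1 = n - 1 + r by ring, h1, h2]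
    ring

theorem sum_SS (r : ℕ) (l : ℤ) (hl : 0 ≤ l) (n : ℕ) (A : CyclicField r) :
    ∑ k ∈ Finset.Icc 1 n, A / (xv r (l + k - 1) * xv r (l + k))
      = A * (SS r (l + n + 1) - SS r (l + 1)) := by
  induction n with
  | zero => simp
  | succ n ih =>
    rw [Finset.sum_Icc_succ_top (by omega), ih, SS_succ r (l + (n + 1 : ℕ)) (by omega)]
    push_cast
    rw [show l + ((n : ℤ) + 1) = l + n + 1 by ring]
    ring

theorem X_eq (r : ℕ) (l : ℤ) (hl : 0 ≤ l) (n : ℕ) :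
    Xgcv r l n = xv r (l + n) * xv r (l - 1) * (SS r (l + n + 1) - SS r l) := by
  have h0 := xv_ne r l
  have h1 := xv_ne r (l - 1)
  cases n with
  | zero =>
    have := SS_succ r l hl
    simp only [Xgcv, Nat.cast_zero, add_zero, this]
    field_simp
    ring
  | succ n =>
    have h2 := xv_ne r (l + n)
    have h3 := xv_ne r (l + n + 1)
    have hp := xv_add r (l - 1) 1
    rw [one_mul, show l - 1 + (r : ℤ) = l + r - 1 by ring] at hp
    simp only [Xgcv]
    rw [sum_SS r l hl, hp]
    push_cast
    rw [show l + ((n : ℤ) + 1) = l + n + 1 by ring, SS_succ r (l + n + 1) (by omega),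
      SS_succ r l hl, show l + (n : ℤ) + 1 - 1 = l + n by ring]
    field_simp
    ring

theorem X_eq' (r : ℕ) (l n e p : ℤ) (hl : 0 ≤ l) (hn : 0 ≤ n) (c : ℤ) (he : l + n = e + c * r)
    (hp : p = l + n + 1) :
    Xgcv r l n.toNat = xv r e * xv r (l - 1) * (SS r p - SS r l) := by
  rw [X_eq r l hl, Int.toNat_of_nonneg hn, hp, he, xv_add]

/-- inductive multiplication formula, case `j ≤ i`, `k + i ≥ r + j`. -/
theorem stmt3 (r : ℕ) (hr : 1 ≤ r) (i j k l m : ℤ)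
    (hj : 1 ≤ j) (hji : j ≤ i) (hi : i ≤ r)
    (hl0 : 0 ≤ l) (hl : l ≤ (r : ℤ) - 1) (hm : 0 ≤ m)
    (hk1 : 1 ≤ k) (hk2 : k ≤ m * r + l) (hki : k + i ≥ r + j) :
    Xgcv r i k.toNat * Xgcv r j (m * r + l).toNat =
      Xgcv r i ((m + 1) * r + l + j - i).toNat * Xgcv r j (k + i - r - j).toNat
        + Xgcv r i ((r : ℤ) + j - i - 1).toNat
            * Xgcv r (k + i + 1) ((m + 1) * r + l + j - k - i - 1).toNat := by
  have hmr : 0 ≤ m * r := by positivity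
  have hc : (m + 1) * (r : ℤ) = m * r + r := by ring
  rw [X_eq' r i k (k + i) (k + i + 1) (by omega) (by omega) 0 (by ring) (by ring),
    X_eq' r j (m * r + l) (l + j) (m * r + l + j + 1) (by omega) (by omega) m (by ring) (by ring),
    X_eq' r i ((m + 1) * r + l + j - i) (l + j) (m * r + l + j + 1 + r) (by omega) (by omega)
      (m + 1) (by ring) (by ring),
    X_eq' r j (k + i - r - j) (k + i) (k + i + 1 - r) (by omega) (by omega) (-1) (by ring)
      (by ring),
    X_eq' r i (r + j - i - 1) (j - 1) (j + r) (by omega) (by omega) 1 (by ring) (by ring),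
    X_eq' r (k + i + 1) ((m + 1) * r + l + j - k - i - 1) (l + j) (m * r + l + j + 1 + r)
      (by omega) (by omega) (m + 1) (by ring) (by ring),
    SS_per r (m * r + l + j + 1) (by omega), SS_per r j (by omega)]
  have h := SS_per r (k + i + 1 - r) (by omega)
  rw [sub_add_cancel] at h
  rw [h, show k + i + 1 - 1 = k + i by ring]
  ring
end

section
/- Fix an integer r ≥ 1 and set y_j = (x_{j+1} + x_{j-1})/x_j ∈ ℚ(x_1,…,x_r) for each integer j (indices modulo r); y_j = X(j,1) is the generalized cluster variable of the simple representation E_j. Then the family of Laurent monomials {∏_{j=1}^{r} y_j^{b_j} : b = (b_1,…,b_r) ∈ ℕ^r such that b_j = 0 for at least one j} is linearly independent over ℤ in ℚ(x_1,…,x_r); in particular these elements are pairwise distinct. (This is the linear independence of the set ℬ′(Q) = {X_{E(A,i)}}, where E(A,i) is the direct sum of the simples E_i, E_{i+1}, …, E_{i+r-2} with multiplicities given by a row of A, and X of a direct sum is the product of the X's of the summands.) -/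
/-- Positive real points with prescribed `y_j` for `j ≠ i` and bounded `y_i`. -/
theorem exists_point (r : ℕ) [NeZero r] (i : ZMod r) (w : ZMod r → ℝ) (hw : ∀ j, 2 < w j) :
    ∃ x : ZMod r → ℝ, (∀ j, 0 < x j) ∧ (∀ j, j ≠ i → (x (j + 1) + x (j - 1)) / x j = w j) ∧
      0 ≤ (x (i + 1) + x (i - 1)) / x i ∧ (x (i + 1) + x (i - 1)) / x i ≤ 2 := by
  classical
  -- the linear map whose kernel is trivial
  let L : (ZMod r → ℝ) →ₗ[ℝ] (ZMod r → ℝ) :=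
    { toFun := fun x j => if j = i then x i else w j * x j - x (j + 1) - x (j - 1)
      map_add' := by
        intro x y; ext j; by_cases h : j = i <;> simp [h]; ring
      map_smul' := by
        intro c x; ext j; by_cases h : j = i <;> simp [h]; ring }
  have hL : ∀ x j, L x j = if j = i then x i else w j * x j - x (j + 1) - x (j - 1) :=
    fun _ _ => rfl
  have hnonneg : ∀ x : ZMod r → ℝ, 0 ≤ x i → (∀ j, j ≠ i → w j * x j = x (j + 1) + x (j - 1)) →
      ∀ j, 0 ≤ x j := by
    intro x hxi hx
    obtain ⟨m, hm⟩ := Finite.exists_min x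
    have : 0 ≤ x m := by
      by_cases h : m = i
      · rwa [h]
      · have h1 := hx m h
        nlinarith [hm (m + 1), hm (m - 1), hw m]
    exact fun j => this.trans (hm j)
  have hinj : Function.Injective L := by
    rw [injective_iff_map_eq_zero]
    intro x hx
    have h0 : x i = 0 := by have := congrFun hx i; rw [hL] at this; simpa using this
    have h1 : ∀ j, j ≠ i → w j * x j = x (j + 1) + x (j - 1) := by
      intro j hj; have := congrFun hx j; rw [hL] at this; simp [hj] at this; linarith
    have h2 := hnonneg x h0.ge h1
    have h3 := hnonneg (-x) (by simp [h0]) (by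
      intro j hj; have := h1 j hj; simp only [Pi.neg_apply]; linarith)
    ext j
    have := h2 j; have := h3 j; simp only [Pi.neg_apply] at this
    simp only [Pi.zero_apply]; linarith
  have hsurj : Function.Surjective L := LinearMap.injective_iff_surjective.mp hinj
  obtain ⟨x, hx⟩ := hsurj (Pi.single i 1)
  have h0 : x i = 1 := by have := congrFun hx i; rw [hL] at this; simpa using this
  have h1 : ∀ j, j ≠ i → w j * x j = x (j + 1) + x (j - 1) := by
    intro j hj; have := congrFun hx j; rw [hL] at this; simp [hj] at this; linarith
  have h2 := hnonneg x (by rw [h0]; norm_num) h1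
  have hpos : ∀ j, 0 < x j := by
    intro j
    refine lt_of_le_of_ne (h2 j) fun h => ?_
    have key : ∀ n : ℕ, x (j + n) = 0 := by
      intro n
      induction n with
      | zero => simpa using h.symm
      | succ n ih =>
        have hne : j + (n : ZMod r) ≠ i := by
          intro h'; rw [h', h0] at ih; exact one_ne_zero ih
        have := h1 _ hne
        rw [ih] at this
        have a := h2 (j + n + 1)
        have b := h2 (j + n - 1)
        push_cast
        rw [← add_assoc]; linarith
    have := key (i - j).val
    rw [ZMod.natCast_zmod_val, add_sub_cancel, h0] at this
    exact one_ne_zero this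
  have hle : ∀ j, x j ≤ 1 := by
    obtain ⟨m, hm⟩ := Finite.exists_max x
    have : x m ≤ 1 := by
      by_cases h : m = i
      · rw [h, h0]
      · have h1 := h1 m h
        nlinarith [hm (m + 1), hm (m - 1), hw m, hpos m]
    exact fun j => (hm j).trans this
  refine ⟨x, hpos, ?_, ?_, ?_⟩
  · intro j hj
    rw [div_eq_iff (hpos j).ne', h1 j hj]
  · have := hpos (i + 1); have := hpos (i - 1); have := hpos i; positivity
  · rw [h0, div_one]; linarith [hle (i + 1), hle (i - 1)]

/-- Transfer of a relation from the field of rational functions to real points. -/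
theorem transfer (r : ℕ) [NeZero r] {β : Type*} (s : Finset β) (c : β → ℤ) (b : β → ZMod r → ℕ)
    (h : ∑ k ∈ s, (c k : CyclicField r) * ∏ j : ZMod r,
      ((algebraMap (MvPolynomial (ZMod r) ℚ) (CyclicField r) (MvPolynomial.X (j + 1)) +
        algebraMap (MvPolynomial (ZMod r) ℚ) (CyclicField r) (MvPolynomial.X (j - 1))) /
        algebraMap (MvPolynomial (ZMod r) ℚ) (CyclicField r) (MvPolynomial.X j)) ^ b k j = 0)
    (x : ZMod r → ℝ) (hx : ∀ j, 0 < x j) :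
    ∑ k ∈ s, (c k : ℝ) * ∏ j : ZMod r, ((x (j + 1) + x (j - 1)) / x j) ^ b k j = 0 := by
  classical
  let N : ℕ := ∑ k ∈ s, ∑ j, b k j
  have hN : ∀ k ∈ s, ∀ j, b k j ≤ N := fun k hk j =>
    (Finset.single_le_sum (f := fun j => b k j) (fun _ _ => Nat.zero_le _)
      (Finset.mem_univ j)).trans
      (Finset.single_le_sum (f := fun k => ∑ j, b k j) (fun _ _ => Nat.zero_le _) hk)
  let Q : MvPolynomial (ZMod r) ℚ := ∑ k ∈ s, (c k : MvPolynomial (ZMod r) ℚ) *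
    ∏ j : ZMod r, ((MvPolynomial.X (j + 1) + MvPolynomial.X (j - 1)) ^ b k j *
      MvPolynomial.X j ^ (N - b k j))
  have key : ∀ {K : Type} [Field K] (φ : MvPolynomial (ZMod r) ℚ →+* K),
      (∀ j, φ (MvPolynomial.X j) ≠ 0) →
      φ Q = (∏ j, φ (MvPolynomial.X j) ^ N) * ∑ k ∈ s, (c k : K) * ∏ j : ZMod r,
        ((φ (MvPolynomial.X (j + 1)) + φ (MvPolynomial.X (j - 1))) / φ (MvPolynomial.X j))
          ^ b k j := by
    intro K _ φ hφ
    simp only [Q, map_sum, map_mul, map_prod, map_pow, map_add, map_intCast]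
    rw [Finset.mul_sum]
    refine Finset.sum_congr rfl fun k hk => ?_
    rw [mul_left_comm, ← Finset.prod_mul_distrib]
    congr 1
    refine Finset.prod_congr rfl fun j _ => ?_
    rw [div_pow, ← Nat.sub_add_cancel (hN k hk j), pow_add]
    have := hφ j
    simp only [Nat.add_sub_cancel]
    field_simp
  have hinj := IsFractionRing.injective (MvPolynomial (ZMod r) ℚ) (CyclicField r)
  have hQ : Q = 0 := by
    apply hinj
    rw [key (algebraMap (MvPolynomial (ZMod r) ℚ) (CyclicField r)), h, mul_zero, map_zero]
    intro j
    rw [Ne, map_eq_zero_iff _ hinj]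
    exact MvPolynomial.X_ne_zero j
  have := key (MvPolynomial.eval₂Hom (algebraMap ℚ ℝ) x) (by intro j; simpa using (hx j).ne')
  rw [hQ, map_zero] at this
  simp only [MvPolynomial.eval₂Hom_X'] at this
  refine (mul_eq_zero.mp this.symm).resolve_left ?_
  exact Finset.prod_ne_zero_iff.mpr fun j _ => pow_ne_zero _ (hx j).ne'

/-- The top-degree part of a relation vanishes at points with `z_i` replaced by `0`. -/
theorem top_vanish (r : ℕ) [NeZero r] {β : Type*} (s : Finset β) (c : β → ℤ) (b : β → ZMod r → ℕ)
    (h : ∀ x : ZMod r → ℝ, (∀ j, 0 < x j) →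
      ∑ k ∈ s, (c k : ℝ) * ∏ j : ZMod r, ((x (j + 1) + x (j - 1)) / x j) ^ b k j = 0)
    (d : ℕ) (hd : ∀ k ∈ s, ∑ j, b k j ≤ d) (i : ZMod r) (z : ZMod r → ℝ) (hz : ∀ j, 0 < z j) :
    ∑ k ∈ s, (c k : ℝ) * (0 ^ (d - ∑ j, b k j) * ∏ j, (Function.update z i 0 j) ^ b k j) = 0 := by
  classical
  have hev : ∀ᶠ t : ℝ in Filter.atTop, 0 < t ∧ ∀ j, 2 < t * z j := by
    refine (Filter.eventually_gt_atTop 0).and (Filter.eventually_all.mpr fun j => ?_)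
    exact (Filter.tendsto_id.atTop_mul_const (hz j)).eventually_gt_atTop 2
  have hex : ∀ t : ℝ, ∃ a : ℝ, 0 ≤ a ∧ a ≤ 2 ∧ ((0 < t ∧ ∀ j, 2 < t * z j) →
      ∑ k ∈ s, (c k : ℝ) * (t⁻¹ ^ (d - ∑ j, b k j) *
        ∏ j, (Function.update z i (t⁻¹ * a) j) ^ b k j) = 0) := by
    intro t
    by_cases ht : 0 < t ∧ ∀ j, 2 < t * z j
    · obtain ⟨x, hx, hxj, ha0, ha2⟩ := exists_point r i (fun j => t * z j) ht.2
      refine ⟨_, ha0, ha2, fun _ => ?_⟩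
      have h1 := h x hx
      have h2 : ∀ j, (x (j + 1) + x (j - 1)) / x j = t *
          Function.update z i (t⁻¹ * ((x (i + 1) + x (i - 1)) / x i)) j := by
        intro j
        by_cases hj : j = i
        · subst hj
          rw [Function.update_self, mul_inv_cancel_left₀ ht.1.ne']
        · rw [Function.update_of_ne hj, hxj j hj]
      generalize (x (i + 1) + x (i - 1)) / x i = a at h2 ⊢
      simp only [h2] at h1
      rw [← mul_right_inj' (pow_ne_zero d ht.1.ne'), mul_zero, ← h1, Finset.mul_sum]
      refine Finset.sum_congr rfl fun k hk => ?_
      simp only [mul_pow]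
      rw [Finset.prod_mul_distrib, Finset.prod_pow_eq_pow_sum]
      have : t ^ d = t ^ (d - ∑ j, b k j) * t ^ (∑ j, b k j) := by
        rw [← pow_add, Nat.sub_add_cancel (hd k hk)]
      rw [this, inv_pow]
      have := pow_ne_zero (d - ∑ j, b k j) ht.1.ne'
      field_simp
    · exact ⟨0, le_rfl, by norm_num, fun h => (ht h).elim⟩
  choose a ha0 ha2 ha using hex
  let G : ℝ × ℝ → ℝ := fun p => ∑ k ∈ s, (c k : ℝ) * (p.1 ^ (d - ∑ j, b k j) *
        ∏ j, (Function.update z i p.2 j) ^ b k j)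
  have hG : Continuous G := by
    refine continuous_finsetSum _ fun k _ => continuous_const.mul
      ((continuous_fst.pow _).mul (continuous_finsetProd _ fun j _ => Continuous.pow ?_ _))
    by_cases hj : j = i
    · subst hj
      simpa using continuous_snd
    · simpa [Function.update_of_ne hj] using continuous_const
  have hinv : Filter.Tendsto (fun t : ℝ => t⁻¹) Filter.atTop (nhds 0) := tendsto_inv_atTop_zero
  have hlim : Filter.Tendsto (fun t : ℝ => t⁻¹ * a t) Filter.atTop (nhds 0) := by
    refine tendsto_of_tendsto_of_tendsto_of_le_of_le' (g := fun _ => (0:ℝ))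
      (h := fun t => t⁻¹ * 2) tendsto_const_nhds (by simpa using hinv.mul_const 2) ?_ ?_
    · filter_upwards [Filter.eventually_gt_atTop 0] with t ht
      have := ha0 t
      positivity
    · filter_upwards [Filter.eventually_gt_atTop 0] with t ht
      have := ha2 t
      gcongr
  have h3 := (hG.tendsto (0, 0)).comp (hinv.prodMk_nhds hlim)
  have h4 : Filter.Tendsto (G ∘ fun t : ℝ => (t⁻¹, t⁻¹ * a t)) Filter.atTop (nhds 0) := by
    refine tendsto_const_nhds.congr' ?_
    filter_upwards [hev] with t ht
    exact (ha t ht).symm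
  exact tendsto_nhds_unique h3 h4

theorem indep_core (r : ℕ) [NeZero r] {β : Type*} (s : Finset β) (c : β → ℤ) (b : β → ZMod r → ℕ)
    (hb : Function.Injective b) (hb0 : ∀ k, ∃ i, b k i = 0)
    (h : ∀ x : ZMod r → ℝ, (∀ j, 0 < x j) →
      ∑ k ∈ s, (c k : ℝ) * ∏ j : ZMod r, ((x (j + 1) + x (j - 1)) / x j) ^ b k j = 0) :
    ∀ k ∈ s, c k = 0 := by
  classical
  by_contra! hcon
  let s' := s.filter fun k => c k ≠ 0
  have hne : s'.Nonempty := by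
    obtain ⟨k, hk, hck⟩ := hcon
    exact ⟨k, Finset.mem_filter.mpr ⟨hk, hck⟩⟩
  obtain ⟨m, hm, hmax⟩ := Finset.exists_max_image s' (fun k => ∑ j, b k j) hne
  obtain ⟨i, hi⟩ := hb0 m
  have h' : ∀ x : ZMod r → ℝ, (∀ j, 0 < x j) →
      ∑ k ∈ s', (c k : ℝ) * ∏ j : ZMod r, ((x (j + 1) + x (j - 1)) / x j) ^ b k j = 0 := by
    intro x hx
    rw [← h x hx]
    refine Finset.sum_subset (Finset.filter_subset _ _) fun k hk hk' => ?_
    have : c k = 0 := by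
      by_contra hc
      exact hk' (Finset.mem_filter.mpr ⟨hk, hc⟩)
    simp [this]
  have hv := top_vanish r s' c b h' (∑ j, b m j) hmax i
  let T : MvPolynomial (ZMod r) ℝ := ∑ k ∈ s', MvPolynomial.monomial (Finsupp.equivFunOnFinite.symm (b k))
    ((c k : ℝ) * (0 ^ (∑ j, b m j - ∑ j, b k j) * 0 ^ b k i))
  have hT : T = 0 := by
    refine MvPolynomial.funext_set (fun _ => Set.Ioi (0:ℝ)) (fun _ => Set.Ioi_infinite 0) ?_
    intro z hz
    rw [map_zero, ← hv z (fun j => hz j (Set.mem_univ j)), map_sum]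
    refine Finset.sum_congr rfl fun k _ => ?_
    rw [MvPolynomial.eval_monomial, Finsupp.prod_fintype _ _ (by simp)]
    simp only [Finsupp.equivFunOnFinite_symm_apply_apply]
    rw [mul_assoc, mul_assoc]
    congr 2
    by_cases hk : b k i = 0
    · rw [hk, pow_zero, one_mul]
      refine Finset.prod_congr rfl fun j _ => ?_
      by_cases hj : j = i
      · subst hj; rw [hk, pow_zero, pow_zero]
      · rw [Function.update_of_ne hj]
    · rw [zero_pow hk, zero_mul, eq_comm]
      exact Finset.prod_eq_zero (Finset.mem_univ i) (by simp [hk])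
  have hc := congrArg (MvPolynomial.coeff (Finsupp.equivFunOnFinite.symm (b m))) hT
  simp only [T, MvPolynomial.coeff_sum, MvPolynomial.coeff_monomial, MvPolynomial.coeff_zero] at hc
  rw [Finset.sum_eq_single_of_mem m hm] at hc
  · simp [hi] at hc
    exact (Finset.mem_filter.mp hm).2 hc
  · intro k _ hk
    rw [if_neg]
    intro he
    exact hk (hb (Finsupp.equivFunOnFinite.symm.injective he))

/-- with `y_j = (x_{j+1} + x_{j-1})/x_j = X(j, 1)`, the Laurent monomials
`∏_{j=1}^r y_j^{b_j}`, over those `b ∈ ℕ^r` having at least one vanishing coordinate,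
form a `ℤ`-linearly independent family in `ℚ(x_1,…,x_r)`. -/
theorem stmt12 (r : ℕ) (hr : 1 ≤ r) :
    LinearIndependent ℤ
      (fun b : {b : Fin r → ℕ // ∃ j, b j = 0} =>
        ∏ j : Fin r,
          ((xv r ((j : ℕ) + 1 + 1) + xv r ((j : ℕ) + 1 - 1)) / xv r ((j : ℕ) + 1)) ^ b.1 j) := by
  classical
  have : NeZero r := ⟨by omega⟩
  have hinj : Function.Injective (fun j : Fin r => (((j : ℕ) : ZMod r) + 1)) := by
    intro j k hjk
    have h1 : ((j : ℕ) : ZMod r) = ((k : ℕ) : ZMod r) := add_right_cancel hjk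
    have h2 := congrArg ZMod.val h1
    rw [ZMod.val_cast_of_lt j.2, ZMod.val_cast_of_lt k.2] at h2
    exact Fin.ext h2
  let e : Fin r ≃ ZMod r := Equiv.ofBijective _
    ((Fintype.bijective_iff_injective_and_card _).mpr ⟨hinj, by simp [ZMod.card]⟩)
  have he : ∀ j : Fin r, e j = ((j : ℕ) : ZMod r) + 1 := fun _ => rfl
  rw [linearIndependent_iff']
  intro s g hg
  refine indep_core r s g (fun k => k.1 ∘ e.symm) ?_ ?_ ?_
  · intro k l hkl
    apply Subtype.ext
    funext j
    simpa using congrFun hkl (e j)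
  · rintro ⟨k, j, hj⟩
    exact ⟨e j, by simpa using hj⟩
  · refine transfer r s g _ ?_
    rw [← hg]
    refine Finset.sum_congr rfl fun k _ => ?_
    rw [zsmul_eq_mul]
    congr 1
    rw [← Equiv.prod_comp e]
    refine Finset.prod_congr rfl fun j _ => ?_
    simp only [Function.comp_apply, Equiv.symm_apply_apply]
    simp [xv, he]
end
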